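/- Let 𝒜 be a weakly idempotent complete exact category and let (𝒳,𝒴) be a hereditary complete cotorsion pair in 𝒜 such that ω = 𝒳∩𝒴 is contravariantly finite in 𝒜. Then (CoFib_ω, Fib_ω, Weq_ω) is a closed model structure on 𝒜; moreover its class of trivial cofibrations CoFib_ω ∩ Weq_ω equals TCoFib_ω (the split monomorphisms with cokernel in ω), and its class of trivial fibrations Fib_ω ∩ Weq_ω equals TFib_ω (the deflations with kernel in 𝒴). -/

import Mathlib

open CategoryTheory Limits ZeroObject

universe v u

/-- An exact structure (Quillen exact category) on an additive category `𝒜`: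
a class of conflations (kernel-cokernel pairs), closed under isomorphisms,
with identities deflations, deflations closed under composition and stable
under pullback, and inflations stable under pushout. -/
structure ExactStructure (𝒜 : Type u) [Category.{v} 𝒜] [Preadditive 𝒜]
    [HasZeroObject 𝒜] [HasBinaryBiproducts 𝒜] : Type (max u v) where
  conflation : ∀ ⦃X Y Z : 𝒜⦄, (X ⟶ Y) → (Y ⟶ Z) → Prop
  comp_zero : ∀ {X Y Z : 𝒜} {i : X ⟶ Y} {d : Y ⟶ Z}, conflation i d → i ≫ d = 0
  isKernel : ∀ {X Y Z : 𝒜} {i : X ⟶ Y} {d : Y ⟶ Z} (h : conflation i d),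
    Nonempty (IsLimit (KernelFork.ofι i (comp_zero h)))
  isCokernel : ∀ {X Y Z : 𝒜} {i : X ⟶ Y} {d : Y ⟶ Z} (h : conflation i d),
    Nonempty (IsColimit (CokernelCofork.ofπ d (comp_zero h)))
  conflation_iso : ∀ {X Y Z X' Y' Z' : 𝒜} {i : X ⟶ Y} {d : Y ⟶ Z}
    (eX : X ≅ X') (eY : Y ≅ Y') (eZ : Z ≅ Z') {i' : X' ⟶ Y'} {d' : Y' ⟶ Z'},
    conflation i d → i ≫ eY.hom = eX.hom ≫ i' → d ≫ eZ.hom = eY.hom ≫ d' →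
    conflation i' d'
  id_deflation : ∀ X : 𝒜, conflation (0 : (0 : 𝒜) ⟶ X) (𝟙 X)
  deflation_comp : ∀ {X Y Z X' W : 𝒜} {i : X ⟶ Y} {d : Y ⟶ Z} {i' : X' ⟶ Z} {d' : Z ⟶ W},
    conflation i d → conflation i' d' → ∃ (K : 𝒜) (k : K ⟶ Y), conflation k (d ≫ d')
  pullback_deflation : ∀ {X Y Z Z' : 𝒜} {i : X ⟶ Y} {d : Y ⟶ Z},
    conflation i d → ∀ (f : Z' ⟶ Z),
    ∃ (Y' : 𝒜) (f' : Y' ⟶ Y) (d' : Y' ⟶ Z') (K : 𝒜) (k : K ⟶ Y'),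
      IsPullback f' d' d f ∧ conflation k d'
  pushout_inflation : ∀ {X Y Z X' : 𝒜} {i : X ⟶ Y} {d : Y ⟶ Z},
    conflation i d → ∀ (f : X ⟶ X'),
    ∃ (Y' : 𝒜) (f' : Y ⟶ Y') (i' : X' ⟶ Y') (Q : 𝒜) (q : Y' ⟶ Q),
      IsPushout i f f' i' ∧ conflation i' q

variable {𝒜 : Type u} [Category.{v} 𝒜] [Preadditive 𝒜] [HasZeroObject 𝒜]
  [HasBinaryBiproducts 𝒜]

/-- `f` is an inflation: the first map of some conflation. -/
def IsInflation (E : ExactStructure 𝒜) {X Y : 𝒜} (i : X ⟶ Y) : Prop :=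
  ∃ (Z : 𝒜) (d : Y ⟶ Z), E.conflation i d

/-- `f` is a deflation: the second map of some conflation. -/
def IsDeflation (E : ExactStructure 𝒜) {Y Z : 𝒜} (d : Y ⟶ Z) : Prop :=
  ∃ (X : 𝒜) (i : X ⟶ Y), E.conflation i d

/-- `𝒜` is weakly idempotent complete: every split epimorphism is a deflation. -/
def IsWIC (E : ExactStructure 𝒜) : Prop :=
  ∀ {X Y : 𝒜} (d : X ⟶ Y) (s : Y ⟶ X), s ≫ d = 𝟙 Y → IsDeflation E d

/-- `Ext¹(A,B) = 0`: every conflation `B ⟶ M ⟶ A` splits. -/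
def Ext1IsZero (E : ExactStructure 𝒜) (A B : 𝒜) : Prop :=
  ∀ {M : 𝒜} (i : B ⟶ M) (d : M ⟶ A), E.conflation i d → ∃ r : M ⟶ B, i ≫ r = 𝟙 B

/-- `(X, Y)` is a cotorsion pair: each class is the `Ext¹`-orthogonal of the other. -/
def IsCotorsionPair (E : ExactStructure 𝒜) (X Y : Set 𝒜) : Prop :=
  (∀ A : 𝒜, A ∈ X ↔ ∀ B ∈ Y, Ext1IsZero E A B) ∧
  (∀ B : 𝒜, B ∈ Y ↔ ∀ A ∈ X, Ext1IsZero E A B)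

/-- Completeness of a cotorsion pair: every object has approximation sequences. -/
def IsCompleteCP (E : ExactStructure 𝒜) (X Y : Set 𝒜) : Prop :=
  ∀ A : 𝒜,
    (∃ (Y₀ X₀ : 𝒜) (i : Y₀ ⟶ X₀) (d : X₀ ⟶ A), E.conflation i d ∧ X₀ ∈ X ∧ Y₀ ∈ Y) ∧
    (∃ (Y₁ X₁ : 𝒜) (i : A ⟶ Y₁) (d : Y₁ ⟶ X₁), E.conflation i d ∧ X₁ ∈ X ∧ Y₁ ∈ Y)

/-- Heredity of a cotorsion pair: `X` is closed under kernels of deflations and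
`Y` is closed under cokernels of inflations. -/
def IsHereditaryCP (E : ExactStructure 𝒜) (X Y : Set 𝒜) : Prop :=
  (∀ {K A B : 𝒜} (i : K ⟶ A) (d : A ⟶ B), E.conflation i d → A ∈ X → B ∈ X → K ∈ X) ∧
  (∀ {K A B : 𝒜} (i : K ⟶ A) (d : A ⟶ B), E.conflation i d → K ∈ Y → A ∈ Y → B ∈ Y)

/-- `t : W ⟶ B` is a right `ω`-approximation of `B`. -/
def IsRightApprox (ω : Set 𝒜) {W B : 𝒜} (t : W ⟶ B) : Prop :=
  W ∈ ω ∧ ∀ (W' : 𝒜), W' ∈ ω → ∀ g : W' ⟶ B, ∃ h : W' ⟶ W, h ≫ t = g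

/-- `ω` is contravariantly finite: every object has a right `ω`-approximation. -/
def IsContravariantlyFinite (ω : Set 𝒜) : Prop :=
  ∀ B : 𝒜, ∃ (W : 𝒜) (t : W ⟶ B), IsRightApprox ω t

/-- A full additive subcategory closed under isomorphisms and direct summands,
viewed as a class of objects. -/
def AdditivelyClosed (S : Set 𝒜) : Prop :=
  (0 : 𝒜) ∈ S ∧ (∀ A B : 𝒜, A ∈ S → B ∈ S → (A ⊞ B) ∈ S) ∧
  (∀ {A B : 𝒜}, (A ≅ B) → A ∈ S → B ∈ S) ∧
  (∀ {A B : 𝒜} (i : A ⟶ B) (r : B ⟶ A), i ≫ r = 𝟙 A → B ∈ S → A ∈ S)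

/-- `CoFib_ω`: inflations with cokernel in `X`. -/
def CoFibO (E : ExactStructure 𝒜) (X : Set 𝒜) : MorphismProperty 𝒜 :=
  fun _ B f => ∃ (Z : 𝒜) (d : B ⟶ Z), E.conflation f d ∧ Z ∈ X

/-- `Fib_ω`: the `ω`-epic morphisms. -/
def FibO (ω : Set 𝒜) : MorphismProperty 𝒜 :=
  fun A B f => ∀ (W : 𝒜), W ∈ ω → ∀ g : W ⟶ B, ∃ h : W ⟶ A, h ≫ f = g

/-- `Weq_ω`: morphisms `f : A ⟶ B` such that for some `W ∈ ω` and `t : W ⟶ B`,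
`(f,t) : A ⊞ W ⟶ B` is a deflation with kernel in `Y`. -/
def WeqO (E : ExactStructure 𝒜) (ω Y : Set 𝒜) : MorphismProperty 𝒜 :=
  fun A B f => ∃ (W : 𝒜) (_ : W ∈ ω) (t : W ⟶ B) (K : 𝒜) (k : K ⟶ A ⊞ W),
    E.conflation k (biprod.desc f t) ∧ K ∈ Y

/-- `TCoFib_ω`: split monomorphisms with cokernel in `ω`. -/
def TCoFibO (E : ExactStructure 𝒜) (ω : Set 𝒜) : MorphismProperty 𝒜 :=
  fun A B f => (∃ r : B ⟶ A, f ≫ r = 𝟙 A) ∧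
    ∃ (Z : 𝒜) (d : B ⟶ Z), E.conflation f d ∧ Z ∈ ω

/-- `TFib_ω`: deflations with kernel in `Y`. -/
def TFibO (E : ExactStructure 𝒜) (Y : Set 𝒜) : MorphismProperty 𝒜 :=
  fun A _ f => ∃ (K : 𝒜) (k : K ⟶ A), E.conflation k f ∧ K ∈ Y

/-- `g` is a retract of `f`. -/
def IsRetractMor {A' B' A B : 𝒜} (g : A' ⟶ B') (f : A ⟶ B) : Prop :=
  ∃ (φ₁ : A' ⟶ A) (ψ₁ : A ⟶ A') (φ₂ : B' ⟶ B) (ψ₂ : B ⟶ B'),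
    φ₁ ≫ ψ₁ = 𝟙 A' ∧ φ₂ ≫ ψ₂ = 𝟙 B' ∧ φ₁ ≫ f = g ≫ φ₂ ∧ f ≫ ψ₂ = ψ₁ ≫ g

/-- A (closed, Quillen) model structure, given by classes of cofibrations,
fibrations and weak equivalences. -/
structure IsModelStructure (C F W : MorphismProperty 𝒜) : Prop where
  weq_comp : ∀ {X Y Z : 𝒜} (f : X ⟶ Y) (g : Y ⟶ Z), W f → W g → W (f ≫ g)
  weq_cancel_left : ∀ {X Y Z : 𝒜} (f : X ⟶ Y) (g : Y ⟶ Z), W f → W (f ≫ g) → W g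
  weq_cancel_right : ∀ {X Y Z : 𝒜} (f : X ⟶ Y) (g : Y ⟶ Z), W g → W (f ≫ g) → W f
  retract_cofib : ∀ {A' B' A B : 𝒜} (g : A' ⟶ B') (f : A ⟶ B),
    IsRetractMor g f → C f → C g
  retract_fib : ∀ {A' B' A B : 𝒜} (g : A' ⟶ B') (f : A ⟶ B),
    IsRetractMor g f → F f → F g
  retract_weq : ∀ {A' B' A B : 𝒜} (g : A' ⟶ B') (f : A ⟶ B),
    IsRetractMor g f → W f → W g
  lifting_left : ∀ {A B X Y : 𝒜} (i : A ⟶ B) (p : X ⟶ Y) (a : A ⟶ X) (b : B ⟶ Y),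
    C i → W i → F p → a ≫ p = i ≫ b → ∃ s : B ⟶ X, i ≫ s = a ∧ s ≫ p = b
  lifting_right : ∀ {A B X Y : 𝒜} (i : A ⟶ B) (p : X ⟶ Y) (a : A ⟶ X) (b : B ⟶ Y),
    C i → F p → W p → a ≫ p = i ≫ b → ∃ s : B ⟶ X, i ≫ s = a ∧ s ≫ p = b
  fact_left : ∀ {A B : 𝒜} (f : A ⟶ B), ∃ (Z : 𝒜) (i : A ⟶ Z) (p : Z ⟶ B),
    i ≫ p = f ∧ C i ∧ W i ∧ F p
  fact_right : ∀ {A B : 𝒜} (f : A ⟶ B), ∃ (Z : 𝒜) (j : A ⟶ Z) (q : Z ⟶ B),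
    j ≫ q = f ∧ C j ∧ F q ∧ W q

/-- An object is cofibrant if `0 ⟶ X` is a cofibration. -/
def Cofibrant (C : MorphismProperty 𝒜) (A : 𝒜) : Prop := C (0 : (0 : 𝒜) ⟶ A)

/-- An object is fibrant if `X ⟶ 0` is a fibration. -/
def Fibrant (F : MorphismProperty 𝒜) (A : 𝒜) : Prop := F (0 : A ⟶ (0 : 𝒜))

/-- An object is trivial if `0 ⟶ X` is a weak equivalence. -/
def TrivialObj (W : MorphismProperty 𝒜) (A : 𝒜) : Prop := W (0 : (0 : 𝒜) ⟶ A)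

/-- `P` is projective in the exact category. -/
def IsProjObj (E : ExactStructure 𝒜) (P : 𝒜) : Prop :=
  ∀ {A B : 𝒜} (d : A ⟶ B), IsDeflation E d → ∀ g : P ⟶ B, ∃ h : P ⟶ A, h ≫ d = g

/-- The exact category has enough projective objects. -/
def HasEnoughProj (E : ExactStructure 𝒜) : Prop :=
  ∀ X : 𝒜, ∃ (P : 𝒜) (d : P ⟶ X), IsProjObj E P ∧ IsDeflation E d

/-- Cofibrations are exactly the inflations with cofibrant cokernel. -/
def CofibsAreInflWithCofibCoker (E : ExactStructure 𝒜) (C : MorphismProperty 𝒜) : Prop :=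
  ∀ {A B : 𝒜} (f : A ⟶ B),
    C f ↔ ∃ (Z : 𝒜) (d : B ⟶ Z), E.conflation f d ∧ Cofibrant C Z

/-- Fibrations are exactly the deflations with fibrant kernel. -/
def FibsAreDeflWithFibKer (E : ExactStructure 𝒜) (F : MorphismProperty 𝒜) : Prop :=
  ∀ {A B : 𝒜} (f : A ⟶ B),
    F f ↔ ∃ (K : 𝒜) (k : K ⟶ A), E.conflation k f ∧ Fibrant F K

/-- Trivial fibrations are exactly the deflations with trivially fibrant kernel. -/
def TrivFibsAreDeflWithTrivFibKer (E : ExactStructure 𝒜)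
    (F W : MorphismProperty 𝒜) : Prop :=
  ∀ {A B : 𝒜} (f : A ⟶ B),
    (F f ∧ W f) ↔ ∃ (K : 𝒜) (k : K ⟶ A), E.conflation k f ∧ Fibrant F K ∧ TrivialObj W K

/-- Every cofibration is an inflation. -/
def CofibsAreInfl (E : ExactStructure 𝒜) (C : MorphismProperty 𝒜) : Prop :=
  ∀ {A B : 𝒜} (f : A ⟶ B), C f → IsInflation E f

/-- Every trivial fibration is a deflation. -/
def TrivFibsAreDefl (E : ExactStructure 𝒜) (F W : MorphismProperty 𝒜) : Prop :=
  ∀ {A B : 𝒜} (f : A ⟶ B), F f → W f → IsDeflation E f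

/-- An exact model structure in the sense of Gillespie. -/
def IsExactModelStr (E : ExactStructure 𝒜) (C F W : MorphismProperty 𝒜) : Prop :=
  IsModelStructure C F W ∧ CofibsAreInflWithCofibCoker E C ∧ FibsAreDeflWithFibKer E F

/-- A weakly projective model structure: every object is fibrant, cofibrations are
exactly the inflations with cofibrant cokernel, and trivial fibrations are exactly
the deflations with trivially fibrant kernel. -/
def IsWeaklyProjModelStr (E : ExactStructure 𝒜) (C F W : MorphismProperty 𝒜) : Prop :=
  IsModelStructure C F W ∧ (∀ A : 𝒜, Fibrant F A) ∧
    CofibsAreInflWithCofibCoker E C ∧ TrivFibsAreDeflWithTrivFibKer E F W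

/-- A projective model structure: an exact model structure with every object fibrant. -/
def IsProjectiveModelStr (E : ExactStructure 𝒜) (C F W : MorphismProperty 𝒜) : Prop :=
  IsExactModelStr E C F W ∧ (∀ A : 𝒜, Fibrant F A)

/-- A class of objects is thick: closed under direct summands and two-out-of-three
in conflations. -/
def IsThick (E : ExactStructure 𝒜) (S : Set 𝒜) : Prop :=
  (∀ {A B : 𝒜} (i : A ⟶ B) (r : B ⟶ A), i ≫ r = 𝟙 A → B ∈ S → A ∈ S) ∧
  (∀ {X Y Z : 𝒜} (i : X ⟶ Y) (d : Y ⟶ Z), E.conflation i d →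
    ((X ∈ S → Y ∈ S → Z ∈ S) ∧ (X ∈ S → Z ∈ S → Y ∈ S) ∧ (Y ∈ S → Z ∈ S → X ∈ S)))


/-!
Write `ω = 𝒳 ∩ 𝒴`. The weak equivalences turn out to be the morphisms that induce bijections on
stable Hom groups modulo `ω` out of the objects of `𝒳`, so two-out-of-three and stability under
retracts are formal. The key point is that `K` lies in `𝒴` as soon as every morphism from an object
of `𝒳` to `K` factors through `ω`; this is where heredity enters. Hence a weak equivalence that is
also `ω`-epic is a deflation with kernel in `𝒴`. The cofibrations are the maps with the left lifting
property against `TFib_ω`, because `Ext¹` vanishes between `𝒳` and `𝒴`, and the fibrations are those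
with the right lifting property against `TCoFib_ω`.
-/

section ExactCategories

variable {E : ExactStructure 𝒜}

namespace ExactStructure.conflation

variable {A B C : 𝒜} {i : A ⟶ B} {d : B ⟶ C}

lemma mono (h : E.conflation i d) : Mono i :=
  mono_of_isLimit_fork (E.isKernel h).some

lemma epi (h : E.conflation i d) : Epi d :=
  epi_of_isColimit_cofork (E.isCokernel h).some

lemma exists_lift (h : E.conflation i d) {T : 𝒜} (u : T ⟶ B) (hu : u ≫ d = 0) :
    ∃ v : T ⟶ A, v ≫ i = u :=
  ⟨_, (KernelFork.IsLimit.lift' (E.isKernel h).some u hu).2⟩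

lemma exists_desc (h : E.conflation i d) {T : 𝒜} (u : B ⟶ T) (hu : i ≫ u = 0) :
    ∃ v : C ⟶ T, d ≫ v = u :=
  ⟨_, (CokernelCofork.IsColimit.desc' (E.isCokernel h).some u hu).2⟩

lemma isPullback (h : E.conflation i d) :
    IsPullback i (0 : A ⟶ 0) d (0 : (0 : 𝒜) ⟶ C) := by
  have := h.mono
  choose lift lift_comp using fun c : PullbackCone d (0 : (0 : 𝒜) ⟶ C) ↦
    h.exists_lift c.fst (c.condition.trans Limits.comp_zero)
  exact ⟨⟨by simp [E.comp_zero h]⟩, ⟨PullbackCone.IsLimit.mk _ lift lift_comp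
    (fun c ↦ (isZero_zero 𝒜).eq_of_tgt _ _)
    (fun _ _ hm _ ↦ by simp only [← cancel_mono i, hm, lift_comp])⟩⟩

lemma isPushout (h : E.conflation i d) :
    IsPushout i (0 : A ⟶ 0) d (0 : (0 : 𝒜) ⟶ C) := by
  have := h.epi
  choose desc comp_desc using fun c : PushoutCocone i (0 : A ⟶ 0) ↦
    h.exists_desc c.inl (c.condition.trans zero_comp)
  exact ⟨⟨by simp [E.comp_zero h]⟩, ⟨PushoutCocone.IsColimit.mk _ desc comp_desc
    (fun c ↦ (isZero_zero 𝒜).eq_of_src _ _)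
    (fun _ _ hm _ ↦ by simp only [← cancel_epi d, hm, comp_desc])⟩⟩

lemma exists_of_isPullback (h : E.conflation i d) {C' P : 𝒜} {f : C' ⟶ C} {f' : P ⟶ B}
    {d' : P ⟶ C'} (sq : IsPullback f' d' d f) :
    ∃ k : A ⟶ P, E.conflation k d' ∧ k ≫ f' = i := by
  obtain ⟨P₀, f₀, d₀, K, k, sq₀, hk⟩ := E.pullback_deflation h f
  let e := sq₀.isoIsPullback _ _ sq
  have hd' : E.conflation (k ≫ e.hom) d' :=
    E.conflation_iso (.refl _) e (.refl _) hk (by simp) (by simp [e])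
  have ker_d : IsPullback ((k ≫ e.hom) ≫ f') (0 : K ⟶ 0) d (0 : (0 : 𝒜) ⟶ C) := by
    simpa only [zero_comp] using hd'.isPullback.paste_horiz sq
  let a := h.isPullback.isoIsPullback _ _ ker_d
  exact ⟨a.hom ≫ k ≫ e.hom,
    E.conflation_iso a.symm (.refl _) (.refl _) hd' (by simp) (by simp),
    by simpa only [a, Category.assoc] using h.isPullback.isoIsPullback_hom_fst _ _ ker_d⟩

lemma exists_of_isPushout (h : E.conflation i d) {A' P : 𝒜} {f : A ⟶ A'} {f' : B ⟶ P}
    {i' : A' ⟶ P} (sq : IsPushout i f f' i') :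
    ∃ q : P ⟶ C, E.conflation i' q ∧ f' ≫ q = d := by
  obtain ⟨P₀, f₀, i₀, Q, q, sq₀, hq⟩ := E.pushout_inflation h f
  let e := sq₀.isoIsPushout _ _ sq
  have hi' : E.conflation i' (e.inv ≫ q) :=
    E.conflation_iso (.refl _) e (.refl _) hq (by simp [e]) (by simp)
  have coker_i : IsPushout i (0 : A ⟶ 0) (f' ≫ e.inv ≫ q) (0 : (0 : 𝒜) ⟶ Q) := by
    simpa only [Limits.comp_zero] using sq.paste_vert hi'.isPushout
  let c := coker_i.isoIsPushout _ _ h.isPushout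
  exact ⟨(e.inv ≫ q) ≫ c.hom,
    E.conflation_iso (.refl _) (.refl _) c hi' (by simp) (by simp),
    by simpa only [Category.assoc] using coker_i.inl_isoIsPushout_hom _ _ h.isPushout⟩

lemma exists_pullback (h : E.conflation i d) {C' : 𝒜} (f : C' ⟶ C) :
    ∃ (P : 𝒜) (f' : P ⟶ B) (d' : P ⟶ C') (k : A ⟶ P),
      IsPullback f' d' d f ∧ E.conflation k d' ∧ k ≫ f' = i := by
  obtain ⟨P, f', d', _, _, sq, -⟩ := E.pullback_deflation h f
  obtain ⟨k, hk⟩ := h.exists_of_isPullback sq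
  exact ⟨P, f', d', k, sq, hk⟩

lemma exists_pushout (h : E.conflation i d) {A' : 𝒜} (f : A ⟶ A') :
    ∃ (P : 𝒜) (f' : B ⟶ P) (i' : A' ⟶ P) (q : P ⟶ C),
      IsPushout i f f' i' ∧ E.conflation i' q ∧ f' ≫ q = d := by
  obtain ⟨P, f', i', _, _, sq, -⟩ := E.pushout_inflation h f
  obtain ⟨q, hq⟩ := h.exists_of_isPushout sq
  exact ⟨P, f', i', q, sq, hq⟩

lemma exists_retraction (h : E.conflation i d) {s : C ⟶ B} (hs : s ≫ d = 𝟙 C) :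
    ∃ r : B ⟶ A, i ≫ r = 𝟙 A ∧ r ≫ i = 𝟙 B - d ≫ s := by
  have := h.mono
  obtain ⟨r, hr⟩ := h.exists_lift (𝟙 B - d ≫ s) (by simp [hs])
  exact ⟨r, by simp [← cancel_mono i, hr, reassoc_of% E.comp_zero h], hr⟩

lemma exists_section (h : E.conflation i d) {r : B ⟶ A} (hr : i ≫ r = 𝟙 A) :
    ∃ s : C ⟶ B, s ≫ d = 𝟙 C ∧ d ≫ s = 𝟙 B - r ≫ i := by
  have := h.epi
  obtain ⟨s, hs⟩ := h.exists_desc (𝟙 B - r ≫ i) (by simp [reassoc_of% hr])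
  exact ⟨s, by simp [← cancel_epi d, reassoc_of% hs, E.comp_zero h], hs⟩

end ExactStructure.conflation

lemma ExactStructure.conflation_inl_snd (E : ExactStructure 𝒜) (A B : 𝒜) :
    E.conflation (biprod.inl : A ⟶ A ⊞ B) (biprod.snd : A ⊞ B ⟶ B) := by
  obtain ⟨q, hq, inr_q⟩ := (E.id_deflation B).exists_of_isPushout
    (IsPushout.of_has_biproduct A B).flip
  obtain rfl : q = biprod.snd := biprod.hom_ext' _ _ (by simp [E.comp_zero hq]) (by simp [inr_q])
  exact hq

lemma ExactStructure.conflation.exists_conflation_section {A B C : 𝒜} {i : A ⟶ B} {d : B ⟶ C}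
    (h : E.conflation i d) {s : C ⟶ B} (hs : s ≫ d = 𝟙 C) :
    ∃ r : B ⟶ A, E.conflation s r ∧ i ≫ r = 𝟙 A := by
  have := h.mono
  obtain ⟨r, hir, hri⟩ := h.exists_retraction hs
  have hsr : s ≫ r = 0 := by simp [← cancel_mono i, hri, reassoc_of% hs]
  let e : C ⊞ A ≅ B :=
    { hom := biprod.desc s i
      inv := biprod.lift d r
      hom_inv_id := by ext <;> simp [hs, hsr, hir, E.comp_zero h]
      inv_hom_id := by simp [hri] }
  refine ⟨r, ?_, hir⟩
  exact E.conflation_iso (.refl _) e (.refl _) (E.conflation_inl_snd C A) (by simp [e])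
    (by ext <;> simp [e, hsr, hir])

lemma ExactStructure.conflation_inr_fst (E : ExactStructure 𝒜) (A B : 𝒜) :
    E.conflation (biprod.inr : B ⟶ A ⊞ B) (biprod.fst : A ⊞ B ⟶ A) := by
  obtain ⟨q, hq, inl_q⟩ := (E.conflation_inl_snd A B).exists_conflation_section biprod.inr_snd
  obtain rfl : q = biprod.fst := biprod.hom_ext' _ _ (by simp [inl_q]) (by simp [E.comp_zero hq])
  exact hq

lemma ExactStructure.conflation.exists_comp {A B C K L : 𝒜} {k : K ⟶ A} {f : A ⟶ B} {l : L ⟶ B}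
    {g : B ⟶ C} (hf : E.conflation k f) (hg : E.conflation l g) :
    ∃ (M : 𝒜) (m : M ⟶ A) (k' : K ⟶ M) (e : M ⟶ L),
      E.conflation m (f ≫ g) ∧ E.conflation k' e ∧ IsPullback m e f l ∧ k' ≫ m = k := by
  obtain ⟨M, m, hm⟩ := E.deflation_comp hf hg
  have sq := hm.isPullback.of_bot' hg.isPullback
  obtain ⟨k', hk', hk'm⟩ := hf.exists_of_isPullback sq
  exact ⟨M, m, k', _, hm, hk', sq, hk'm⟩

-- The kernel sequence of `f` is a pushout of that of `s ≫ f`.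
lemma IsDeflation.conflation_of_comp {A B C M : 𝒜} {s : A ⟶ B} {f : B ⟶ C} {m : M ⟶ B}
    (hs : IsDeflation E s) (hsf : IsDeflation E (s ≫ f))
    (hm : IsPullback m (0 : M ⟶ 0) f (0 : (0 : 𝒜) ⟶ C)) : E.conflation m f := by
  obtain ⟨K, k, hs⟩ := hs
  obtain ⟨L, l, hsf⟩ := hsf
  have := hs.epi
  have pb := hsf.isPullback.of_bot' hm
  obtain ⟨k', hk', hk'l⟩ := hs.exists_of_isPullback pb
  have po : IsPushout l _ s m :=
    IsPushout.of_left (by simpa only [hk'l, zero_comp] using hs.isPushout) pb.w hk'.isPushout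
  obtain ⟨q, hq, hsq⟩ := hsf.exists_of_isPushout po
  rwa [(cancel_epi s).1 hsq] at hq

-- In the pullback `P` of `a ≫ g` and `g` the projection to `A` is a split epimorphism, hence a
-- deflation, and its kernel is also the kernel of `g`.
lemma IsDeflation.of_comp (hE : IsWIC E) {A B C : 𝒜} {a : A ⟶ B} {g : B ⟶ C}
    (h : IsDeflation E (a ≫ g)) : IsDeflation E g := by
  obtain ⟨K, k, hag⟩ := h
  obtain ⟨P, g', q, k', pb, hq, -⟩ := hag.exists_pullback g
  obtain ⟨N, n, hg'⟩ := hE g' (pb.lift (𝟙 A) a (by simp)) (by simp)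
  obtain ⟨L, l, hqg⟩ := E.deflation_comp hg' hag
  rw [pb.w] at hqg
  have ker_g : IsPullback (n ≫ q) (0 : N ⟶ 0) g (0 : (0 : 𝒜) ⟶ C) := by
    simpa only [zero_comp] using hg'.isPullback.paste_horiz pb.flip
  exact ⟨_, _, IsDeflation.conflation_of_comp ⟨_, _, hq⟩ ⟨_, _, hqg⟩ ker_g⟩

lemma ExactStructure.conflation.isPullback_biprod_desc {A B C D : 𝒜} {j : A ⟶ B} {q : B ⟶ C}
    (h : E.conflation j q) (y : D ⟶ B) :
    IsPullback (biprod.desc j y) (biprod.snd : A ⊞ D ⟶ D) q (y ≫ q) := by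
  have := h.mono
  choose a ha using fun c : PullbackCone q (y ≫ q) ↦
    h.exists_lift (c.fst - c.snd ≫ y) (by simp [c.condition])
  refine ⟨⟨by ext <;> simp [E.comp_zero h]⟩, ⟨PullbackCone.IsLimit.mk _
    (fun c ↦ biprod.lift (a c) c.snd) (fun c ↦ by simp [ha]) (fun c ↦ by simp) ?_⟩⟩
  intro c m hfst hsnd
  have : m ≫ biprod.fst = a c := by
    rw [← cancel_mono j, ha, ← hfst, ← hsnd]
    simp [biprod.desc_eq]
  ext <;> simp [this, hsnd]

-- In the pushout `D` of `i` along `-f`, `B ⊞ C` is the pullback of the deflations `q` and `y ≫ q`,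
-- so the kernel `i` of the latter embeds into it, as the graph of `f`.
lemma IsInflation.lift {A B C : 𝒜} {i : A ⟶ C} (hi : IsInflation E i) (f : A ⟶ B) :
    IsInflation E (biprod.lift f i) := by
  obtain ⟨Q, d, hi⟩ := hi
  obtain ⟨D, y, j, q, po, hq, rfl⟩ := hi.exists_pushout (-f)
  have := hq.mono
  obtain ⟨κ, hκ, hκi⟩ := hi.exists_of_isPullback (hq.isPullback_biprod_desc y).flip
  have : κ = biprod.lift f i := by
    have hzero : (κ ≫ biprod.fst) ≫ j + i ≫ y = 0 := by
      rw [← hκi, ← E.comp_zero hκ]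
      simp [biprod.desc_eq]
    have hfst : κ ≫ biprod.fst = f := by
      rw [← cancel_mono j, eq_neg_of_add_eq_zero_left hzero, po.w, Preadditive.neg_comp, neg_neg]
    ext <;> simp [hfst, hκi]
  exact ⟨D, _, this ▸ hκ⟩

lemma TFibO.of_comp_of_isSplitEpi (hE : IsWIC E) {S : Set 𝒜}
    (hS : ∀ {A B : 𝒜} (i : A ⟶ B) (r : B ⟶ A), i ≫ r = 𝟙 A → B ∈ S → A ∈ S)
    {A B C : 𝒜} {s : A ⟶ B} {j : B ⟶ A} (hjs : j ≫ s = 𝟙 B) {f : B ⟶ C}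
    (hsf : TFibO E S (s ≫ f)) : TFibO E S f := by
  obtain ⟨L, l, hl, hL⟩ := hsf
  obtain ⟨M, m, hm⟩ := IsDeflation.of_comp hE ⟨L, l, hl⟩
  have := hm.mono
  obtain ⟨r, hr⟩ := hm.exists_lift (l ≫ s) (by simpa using E.comp_zero hl)
  obtain ⟨i, hi⟩ := hl.exists_lift (m ≫ j) (by simp [reassoc_of% hjs, E.comp_zero hm])
  exact ⟨M, m, hm, hS i r (by simp [← cancel_mono m, hr, reassoc_of% hi, hjs]) hL⟩

-- The complement `K` of `B` in `C` is a direct summand of the cokernel `Q` of `g ≫ s`, and the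
-- complement of `K` in `Q` is a cokernel of `g`.
lemma CoFibO.of_comp_of_isSplitMono (hE : IsWIC E) {S : Set 𝒜}
    (hS : ∀ {A B : 𝒜} (i : A ⟶ B) (r : B ⟶ A), i ≫ r = 𝟙 A → B ∈ S → A ∈ S)
    {A B C : 𝒜} {s : B ⟶ C} {p : C ⟶ B} (hsp : s ≫ p = 𝟙 B) {g : A ⟶ B}
    (hgs : CoFibO E S (g ≫ s)) : CoFibO E S g := by
  obtain ⟨Q, c, hc, hQ⟩ := hgs
  obtain ⟨K, k, hk⟩ := hE p s hsp
  obtain ⟨π, hπ, hkπ⟩ := hk.exists_conflation_section hsp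
  have := hπ.mono
  obtain ⟨ρ, rfl⟩ := hc.exists_desc π (by simp [E.comp_zero hπ])
  have hkcρ : (k ≫ c) ≫ ρ = 𝟙 K := by simpa using hkπ
  obtain ⟨M, m, hm⟩ := hE ρ (k ≫ c) hkcρ
  obtain ⟨κ, hκ, hκs⟩ := hc.exists_of_isPullback (hπ.isPullback.of_bot' hm.isPullback)
  obtain ⟨r, hr, -⟩ := hm.exists_retraction hkcρ
  rw [(cancel_mono s).1 hκs] at hκ
  exact ⟨M, _, hκ, hS m r hr hQ⟩

end ExactCategories

section ExtVanishing

variable {E : ExactStructure 𝒜}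

namespace Ext1IsZero

lemma exists_extension {A B C U : 𝒜} {i : A ⟶ B} {d : B ⟶ C} (hCU : Ext1IsZero E C U)
    (h : E.conflation i d) (g : A ⟶ U) : ∃ g' : B ⟶ U, i ≫ g' = g := by
  obtain ⟨P, y, j, q, po, hq, -⟩ := h.exists_pushout g
  obtain ⟨r, hr⟩ := hCU j q hq
  exact ⟨y ≫ r, by simp [reassoc_of% po.w, hr]⟩

lemma exists_lift {A B C T : 𝒜} {i : A ⟶ B} {d : B ⟶ C} (hTA : Ext1IsZero E T A)
    (h : E.conflation i d) (g : T ⟶ C) : ∃ g' : T ⟶ B, g' ≫ d = g := by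
  obtain ⟨P, y, q, k, pb, hq, -⟩ := h.exists_pullback g
  obtain ⟨r, hr⟩ := hTA k q hq
  obtain ⟨s, hs, -⟩ := hq.exists_section hr
  exact ⟨s ≫ y, by simp [pb.w, reassoc_of% hs]⟩

-- A lift is a section over `B` of the pullback `P` of `p` which restricts on `A` to the map `α`
-- given by the square. Over `A` the deflation `P ⟶ B` is split by `α`, and `Ext¹(Q, K) = 0`
-- extends the corresponding retraction onto `K` to all of `P`.
lemma hasLiftingProperty {A B Q K S T : 𝒜} {i : A ⟶ B} {d : B ⟶ Q} {k : K ⟶ S} {p : S ⟶ T}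
    (hQK : Ext1IsZero E Q K) (hi : E.conflation i d) (hp : E.conflation k p) :
    HasLiftingProperty i p := by
  refine ⟨fun {a b} sq ↦ ?_⟩
  obtain ⟨P, y, π, κ, pb, hπ, -⟩ := hp.exists_pullback b
  let α : A ⟶ P := pb.lift a i sq.w
  obtain ⟨M, m, k', e, hm, he, pb', hk'⟩ := hπ.exists_comp hi
  have := he.mono
  let α' : A ⟶ M := pb'.lift α (𝟙 A) (by simp [α])
  obtain ⟨r, hk'r, hr⟩ := he.exists_retraction (s := α') (by simp [α'])
  have hα'r : α' ≫ r = 0 := by simp [← cancel_mono k', hr, α']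
  obtain ⟨ρ, hρ⟩ := hQK.exists_extension hm r
  have hαρ : α ≫ ρ = 0 := by
    rw [← pb'.lift_fst α (𝟙 A) (by simp [α]), Category.assoc, hρ, hα'r]
  obtain ⟨s, hsπ, hπs⟩ := hπ.exists_section (r := ρ) (by rw [← hk', Category.assoc, hρ, hk'r])
  have his : i ≫ s = α := by
    rw [← pb.lift_snd a i sq.w, Category.assoc, hπs]
    simp [α, reassoc_of% hαρ]
  exact ⟨⟨s ≫ y, by simp [reassoc_of% his, α], by simp [pb.w, reassoc_of% hsπ]⟩⟩

lemma of_retract_right {A B Q : 𝒜} {i : A ⟶ B} {r : B ⟶ A} (hQB : Ext1IsZero E Q B)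
    (hir : i ≫ r = 𝟙 A) : Ext1IsZero E Q A := by
  intro M j d h
  obtain ⟨g, hg⟩ := hQB.exists_extension h i
  exact ⟨g ≫ r, by rw [reassoc_of% hg, hir]⟩

lemma of_retract_left {A B K : 𝒜} {i : A ⟶ B} {r : B ⟶ A} (hBK : Ext1IsZero E B K)
    (hir : i ≫ r = 𝟙 A) : Ext1IsZero E A K := by
  intro M j d h
  obtain ⟨g, hg⟩ := hBK.exists_lift h r
  obtain ⟨t, ht, -⟩ := h.exists_retraction (s := i ≫ g) (by rw [Category.assoc, hg, hir])
  exact ⟨t, ht⟩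

lemma of_conflation_right {A B C Q : 𝒜} {i : A ⟶ B} {d : B ⟶ C} (h : E.conflation i d)
    (hQA : Ext1IsZero E Q A) (hQC : Ext1IsZero E Q C) : Ext1IsZero E Q B := by
  intro M j e hj
  obtain ⟨g, hg⟩ := hQC.exists_extension hj d
  have := hQA.hasLiftingProperty hj h
  have sq : CommSq (𝟙 B) j d g := ⟨by simp [hg]⟩
  exact ⟨sq.lift, sq.fac_left⟩

lemma of_conflation_left {A B C K : 𝒜} {i : A ⟶ B} {d : B ⟶ C} (h : E.conflation i d)
    (hAK : Ext1IsZero E A K) (hCK : Ext1IsZero E C K) : Ext1IsZero E B K := by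
  intro M j e hj
  obtain ⟨g, hg⟩ := hAK.exists_lift hj i
  have := hCK.hasLiftingProperty h hj
  have sq : CommSq g i e (𝟙 B) := ⟨by simp [hg]⟩
  obtain ⟨r, hr, -⟩ := hj.exists_retraction sq.fac_right
  exact ⟨r, hr⟩

lemma zero_right (Q : 𝒜) : Ext1IsZero E Q 0 :=
  fun _ _ _ ↦ ⟨0, (isZero_zero 𝒜).eq_of_src _ _⟩

lemma zero_left (K : 𝒜) : Ext1IsZero E 0 K := by
  intro M j e hj
  obtain ⟨r, hr, -⟩ := hj.exists_retraction (s := 0) ((isZero_zero 𝒜).eq_of_src _ _)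
  exact ⟨r, hr⟩

end Ext1IsZero

lemma AdditivelyClosed.of_conflation_of_retract (E : ExactStructure 𝒜) {S : Set 𝒜}
    (zero : (0 : 𝒜) ∈ S)
    (conflation : ∀ {A B C : 𝒜} {i : A ⟶ B} {d : B ⟶ C}, E.conflation i d → A ∈ S → C ∈ S → B ∈ S)
    (retract : ∀ {A B : 𝒜} (i : A ⟶ B) (r : B ⟶ A), i ≫ r = 𝟙 A → B ∈ S → A ∈ S) :
    AdditivelyClosed S :=
  ⟨zero, fun A B ↦ conflation (E.conflation_inl_snd A B),
    fun e ↦ retract e.inv e.hom e.inv_hom_id, retract⟩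

lemma AdditivelyClosed.inter {S T : Set 𝒜} (hS : AdditivelyClosed S) (hT : AdditivelyClosed T) :
    AdditivelyClosed (S ∩ T) :=
  ⟨⟨hS.1, hT.1⟩, fun A B hA hB ↦ ⟨hS.2.1 A B hA.1 hB.1, hT.2.1 A B hA.2 hB.2⟩,
    fun e h ↦ ⟨hS.2.2.1 e h.1, hT.2.2.1 e h.2⟩,
    fun i r hir h ↦ ⟨hS.2.2.2 i r hir h.1, hT.2.2.2 i r hir h.2⟩⟩

namespace IsCotorsionPair

variable {X Y : Set 𝒜}

lemma ext1IsZero (hXY : IsCotorsionPair E X Y) {A B : 𝒜} (hA : A ∈ X) (hB : B ∈ Y) :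
    Ext1IsZero E A B :=
  (hXY.1 A).1 hA B hB

lemma mem_left_of_conflation (hXY : IsCotorsionPair E X Y) {A B C : 𝒜} {i : A ⟶ B}
    {d : B ⟶ C} (h : E.conflation i d) (hA : A ∈ X) (hC : C ∈ X) : B ∈ X :=
  (hXY.1 B).2 fun _ hK ↦
    Ext1IsZero.of_conflation_left h (hXY.ext1IsZero hA hK) (hXY.ext1IsZero hC hK)

lemma mem_right_of_conflation (hXY : IsCotorsionPair E X Y) {A B C : 𝒜} {i : A ⟶ B}
    {d : B ⟶ C} (h : E.conflation i d) (hA : A ∈ Y) (hC : C ∈ Y) : B ∈ Y :=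
  (hXY.2 B).2 fun _ hQ ↦
    Ext1IsZero.of_conflation_right h (hXY.ext1IsZero hQ hA) (hXY.ext1IsZero hQ hC)

lemma additivelyClosed_left (hXY : IsCotorsionPair E X Y) : AdditivelyClosed X :=
  .of_conflation_of_retract E ((hXY.1 0).2 fun _ _ ↦ Ext1IsZero.zero_left _)
    hXY.mem_left_of_conflation
    fun _ _ hir hB ↦ (hXY.1 _).2 fun _ hK ↦ Ext1IsZero.of_retract_left (hXY.ext1IsZero hB hK) hir

lemma additivelyClosed_right (hXY : IsCotorsionPair E X Y) : AdditivelyClosed Y :=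
  .of_conflation_of_retract E ((hXY.2 0).2 fun _ _ ↦ Ext1IsZero.zero_right _)
    hXY.mem_right_of_conflation
    fun _ _ hir hB ↦ (hXY.2 _).2 fun _ hQ ↦ Ext1IsZero.of_retract_right (hXY.ext1IsZero hQ hB) hir

lemma additivelyClosed_inter (hXY : IsCotorsionPair E X Y) : AdditivelyClosed (X ∩ Y) :=
  hXY.additivelyClosed_left.inter hXY.additivelyClosed_right

end IsCotorsionPair

end ExtVanishing

section LiftingAndFactorization

open MorphismProperty

variable {E : ExactStructure 𝒜}

lemma tCoFibO_inl (E : ExactStructure 𝒜) {ω : Set 𝒜} (A : 𝒜) {W : 𝒜} (hW : W ∈ ω) :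
    TCoFibO E ω (biprod.inl : A ⟶ A ⊞ W) :=
  ⟨⟨biprod.fst, by simp⟩, W, biprod.snd, E.conflation_inl_snd A W, hW⟩

theorem fibO_eq_rlp (E : ExactStructure 𝒜) (ω : Set 𝒜) : FibO ω = (TCoFibO E ω).rlp := by
  ext A B f
  refine ⟨fun hf U V i ⟨⟨r, hir⟩, Z, d, hd, hZ⟩ ↦ ⟨fun {a b} sq ↦ ?_⟩, fun hf W hW g ↦ ?_⟩
  · obtain ⟨s, -, hds⟩ := hd.exists_section hir
    obtain ⟨h, hh⟩ := hf Z hZ (s ≫ b)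
    refine ⟨⟨r ≫ a + d ≫ h, ?_, ?_⟩⟩
    · simp [reassoc_of% hir, reassoc_of% E.comp_zero hd]
    · simp [hh, sq.w, reassoc_of% hds]
  · have : TCoFibO E ω (0 : (0 : 𝒜) ⟶ W) :=
      ⟨⟨0, (isZero_zero 𝒜).eq_of_src _ _⟩, W, 𝟙 W, E.id_deflation W, hW⟩
    have := hf _ this
    have sq : CommSq (0 : 0 ⟶ A) (0 : 0 ⟶ W) f g := ⟨by simp⟩
    exact ⟨sq.lift, sq.fac_right⟩

lemma IsRightApprox.fibO_desc {C : Type*} [Category* C] [Preadditive C] [HasBinaryBiproducts C]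
    {ω : Set C} {A B W : C} {t : W ⟶ B} (ht : IsRightApprox ω t) (f : A ⟶ B) :
    FibO ω (biprod.desc f t) := by
  intro W' hW' g
  obtain ⟨h, rfl⟩ := ht.2 W' hW' g
  exact ⟨h ≫ biprod.inr, by simp⟩

lemma IsContravariantlyFinite.hasFactorization_tCoFibO_fibO {ω : Set 𝒜}
    (hω : IsContravariantlyFinite ω) (E : ExactStructure 𝒜) :
    HasFactorization (TCoFibO E ω) (FibO ω) where
  nonempty_mapFactorizationData {A B} f := by
    obtain ⟨W, t, ht⟩ := hω B
    exact ⟨{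
      Z := A ⊞ W
      i := biprod.inl
      p := biprod.desc f t
      hi := tCoFibO_inl E A ht.1
      hp := ht.fibO_desc f }⟩

namespace IsCotorsionPair

variable {X Y : Set 𝒜}

lemma isStableUnderComposition_tFibO (hXY : IsCotorsionPair E X Y) :
    (TFibO E Y).IsStableUnderComposition where
  comp_mem f g := by
    rintro ⟨K, k, hf, hK⟩ ⟨L, l, hg, hL⟩
    obtain ⟨M, m, k', e, hm, he, -⟩ := hf.exists_comp hg
    exact ⟨M, m, hm, hXY.mem_right_of_conflation he hK hL⟩

lemma hasFactorization_coFibO_tFibO (hXY : IsCotorsionPair E X Y)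
    (hcomp : IsCompleteCP E X Y) :
    HasFactorization (CoFibO E X) (TFibO E Y) where
  nonempty_mapFactorizationData {A B} f := by
    obtain ⟨-, Y₁, X₁, i, d, hi, -, hY₁⟩ := hcomp A
    obtain ⟨C, c, hc⟩ := IsInflation.lift ⟨X₁, d, hi⟩ f
    obtain ⟨⟨Y₂, X₂, y, q, hq, hX₂, hY₂⟩, -⟩ := hcomp C
    obtain ⟨Z, c', q', k, pb, hq', -⟩ := hq.exists_pullback c
    obtain ⟨j, hj, hjq⟩ := hc.exists_of_isPullback pb.flip
    have hfst : TFibO E Y (biprod.fst : B ⊞ Y₁ ⟶ B) :=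
      ⟨Y₁, biprod.inr, E.conflation_inr_fst B Y₁, hY₁⟩
    exact ⟨{
      Z := Z
      i := j
      p := q' ≫ biprod.fst
      fac := by simp [reassoc_of% hjq]
      hi := ⟨X₂, c', hj, hX₂⟩
      hp := hXY.isStableUnderComposition_tFibO.comp_mem _ _ ⟨Y₂, k, hq', hY₂⟩ hfst }⟩

theorem coFibO_eq_llp (hXY : IsCotorsionPair E X Y) (hE : IsWIC E) (hcomp : IsCompleteCP E X Y) :
    CoFibO E X = (TFibO E Y).llp := by
  ext A B f
  refine ⟨fun ⟨Q, d, hf, hQ⟩ S T p ⟨K, k, hp, hK⟩ ↦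
    Ext1IsZero.hasLiftingProperty (hXY.ext1IsZero hQ hK) hf hp, fun hf ↦ ?_⟩
  obtain ⟨φ⟩ := (hXY.hasFactorization_coFibO_tFibO hcomp).nonempty_mapFactorizationData f
  have := hf _ φ.hp
  have sq : CommSq φ.i f φ.p (𝟙 B) := ⟨by simp⟩
  exact .of_comp_of_isSplitMono hE hXY.additivelyClosed_left.2.2.2 sq.fac_right
    (sq.fac_left.symm ▸ φ.hi)

end IsCotorsionPair

end LiftingAndFactorization

section StableCategory

section

variable {C : Type*} [Category* C]

/-- The morphism `f` factors through an object of `ω`. When `ω` is additively closed, these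
morphisms form the ideal of morphisms that vanish in the stable category modulo `ω`. -/
def FactorsThrough (ω : Set C) {X Y : C} (f : X ⟶ Y) : Prop :=
  ∃ (W : C) (a : X ⟶ W) (b : W ⟶ Y), W ∈ ω ∧ a ≫ b = f

namespace FactorsThrough

variable {ω : Set C} {X Y Z : C} {f : X ⟶ Y}

lemma comp (hf : FactorsThrough ω f) (g : Y ⟶ Z) : FactorsThrough ω (f ≫ g) := by
  obtain ⟨W, a, b, hW, rfl⟩ := hf
  exact ⟨W, a, b ≫ g, hW, by simp⟩

lemma precomp (hf : FactorsThrough ω f) (g : Z ⟶ X) : FactorsThrough ω (g ≫ f) := by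
  obtain ⟨W, a, b, hW, rfl⟩ := hf
  exact ⟨W, g ≫ a, b, hW, by simp⟩

lemma neg [Preadditive C] (hf : FactorsThrough ω f) : FactorsThrough ω (-f) := by
  simpa using hf.comp (-𝟙 Y)

end FactorsThrough

lemma isStableUnderRetracts_isColocal (P : ObjectProperty C) :
    P.isColocal.IsStableUnderRetracts where
  of_retract {A' B' A B f g} h hg T hT := by
    have hg := hg T hT
    refine ⟨fun a a' haa' ↦ ?_, fun b ↦ ?_⟩
    · have : a ≫ h.left.i = a' ≫ h.left.i :=
        hg.1 (by simpa using congrArg (· ≫ h.right.i) haa')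
      simpa using congrArg (· ≫ h.left.r) this
    · obtain ⟨a, ha⟩ := hg.2 (b ≫ h.right.i)
      exact ⟨a ≫ h.left.r, by simpa using congrArg (· ≫ h.right.r) ha⟩

variable [Preadditive C]

/-- Two morphisms are stably equal modulo `ω` if their difference factors through an object of
`ω`. The quotient category of this relation is the stable category modulo `ω`. -/
def stableHomRel (ω : Set C) : HomRel C := fun _ _ f g ↦ FactorsThrough ω (f - g)

/-- The morphisms `f : A ⟶ B` which induce bijections `Hom(T, A) → Hom(T, B)` in the stable
category modulo `ω` for all `T` in `X`. -/
def StableIso (X ω : Set C) : MorphismProperty C :=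
  (ObjectProperty.isColocal
    (fun T : CategoryTheory.Quotient (stableHomRel ω) ↦ T.as ∈ X)).inverseImage
      (Quotient.functor (stableHomRel ω))

instance (X ω : Set C) : (StableIso X ω).HasTwoOutOfThreeProperty :=
  inferInstanceAs (MorphismProperty.inverseImage _ _).HasTwoOutOfThreeProperty

instance (X ω : Set C) : (StableIso X ω).IsStableUnderRetracts :=
  have := isStableUnderRetracts_isColocal
    (fun T : CategoryTheory.Quotient (stableHomRel ω) ↦ T.as ∈ X)
  inferInstanceAs (MorphismProperty.inverseImage _ _).IsStableUnderRetracts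

end

namespace FactorsThrough

variable {ω : Set 𝒜} {A B : 𝒜} {f : A ⟶ B}

lemma add (hω : AdditivelyClosed ω) {g : A ⟶ B} (hf : FactorsThrough ω f)
    (hg : FactorsThrough ω g) : FactorsThrough ω (f + g) := by
  obtain ⟨W, a, b, hW, rfl⟩ := hf
  obtain ⟨W', a', b', hW', rfl⟩ := hg
  exact ⟨W ⊞ W', biprod.lift a a', biprod.desc b b', hω.2.1 _ _ hW hW', by simp⟩

lemma zero (hω : AdditivelyClosed ω) (A B : 𝒜) : FactorsThrough ω (0 : A ⟶ B) :=
  ⟨0, 0, 0, hω.1, zero_comp⟩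

end FactorsThrough

lemma AdditivelyClosed.congruence_stableHomRel {ω : Set 𝒜} (hω : AdditivelyClosed ω) :
    Congruence (stableHomRel ω) where
  comp_left f _ _ h := by simpa [stableHomRel] using h.precomp f
  comp_right g h := by simpa [stableHomRel] using h.comp g
  equivalence :=
    { refl f := by simpa [stableHomRel] using FactorsThrough.zero hω _ _
      symm h := by simpa [stableHomRel] using h.neg
      trans h h' := by simpa [stableHomRel] using h.add hω h' }

lemma stableIso_iff {X ω : Set 𝒜} (hω : AdditivelyClosed ω) {A B : 𝒜} {f : A ⟶ B} :
    StableIso X ω f ↔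
      (∀ T ∈ X, ∀ b : T ⟶ B, ∃ a : T ⟶ A, FactorsThrough ω (b - a ≫ f)) ∧
      (∀ T ∈ X, ∀ a : T ⟶ A, FactorsThrough ω (a ≫ f) → FactorsThrough ω a) := by
  have := hω.congruence_stableHomRel
  let Q := Quotient.functor (stableHomRel ω)
  have map_eq {S T : 𝒜} (g h : S ⟶ T) : Q.map g = Q.map h ↔ FactorsThrough ω (g - h) :=
    Quotient.functor_map_eq_iff _ g h
  constructor
  · refine fun hf ↦ ⟨fun T hT b ↦ ?_, fun T hT a ha ↦ ?_⟩
    · obtain ⟨a, ha⟩ := (hf (Q.obj T) hT).2 (Q.map b)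
      obtain ⟨a, rfl⟩ := Q.map_surjective a
      exact ⟨a, (map_eq _ _).1 (by simpa [Q] using ha.symm)⟩
    · have : Q.map a = Q.map 0 := (hf (Q.obj T) hT).1 <| by
        simpa only [Q, ← Functor.map_comp, zero_comp] using (map_eq (a ≫ f) 0).2 (by simpa)
      simpa using (map_eq _ _).1 this
  · rintro ⟨hsurj, hinj⟩ ⟨T⟩ hT
    refine ⟨fun a a' haa' ↦ ?_, fun b ↦ ?_⟩
    · obtain ⟨a, rfl⟩ := Q.map_surjective (X := T) a
      obtain ⟨a', rfl⟩ := Q.map_surjective (X := T) a'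
      refine (map_eq _ _).2 (hinj T hT _ ?_)
      rw [Preadditive.sub_comp, ← map_eq, Functor.map_comp, Functor.map_comp]
      exact haa'
    · obtain ⟨b, rfl⟩ := Q.map_surjective (X := T) b
      obtain ⟨a, ha⟩ := hsurj T hT b
      exact ⟨Q.map a, ((map_eq _ _).2 ha).symm⟩

end StableCategory

section WeakEquivalences

variable {E : ExactStructure 𝒜} {X Y : Set 𝒜}

lemma TCoFibO.stableIso {ω : Set 𝒜} (hω : AdditivelyClosed ω) {A B : 𝒜} {i : A ⟶ B}
    (hi : TCoFibO E ω i) (X : Set 𝒜) : StableIso X ω i := by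
  obtain ⟨⟨r, hir⟩, Q, d, hd, hQ⟩ := hi
  obtain ⟨s, -, hds⟩ := hd.exists_section hir
  exact (stableIso_iff hω).2
    ⟨fun T _ b ↦ ⟨b ≫ r, Q, b ≫ d, s, hQ, by simp [hds]⟩,
      fun T _ a ha ↦ by simpa [hir] using ha.comp r⟩

namespace IsCotorsionPair

lemma tFibO_le_fibO (hXY : IsCotorsionPair E X Y) : TFibO E Y ≤ FibO (X ∩ Y) :=
  fun _ _ _ ⟨_, _, hp, hK⟩ _ hW g ↦ Ext1IsZero.exists_lift (hXY.ext1IsZero hW.1 hK) hp g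

lemma exists_conflation_inter (hXY : IsCotorsionPair E X Y) (hcomp : IsCompleteCP E X Y)
    {T : 𝒜} (hT : T ∈ X) :
    ∃ (W Q : 𝒜) (j : T ⟶ W) (c : W ⟶ Q), E.conflation j c ∧ W ∈ X ∩ Y ∧ Q ∈ X := by
  obtain ⟨-, W, Q, j, c, h, hQ, hW⟩ := hcomp T
  exact ⟨W, Q, j, c, h, ⟨hXY.mem_left_of_conflation h hT hQ, hW⟩, hQ⟩

lemma factorsThrough_of_mem_right (hXY : IsCotorsionPair E X Y) (hcomp : IsCompleteCP E X Y)
    {T K : 𝒜} (hT : T ∈ X) (hK : K ∈ Y) (u : T ⟶ K) : FactorsThrough (X ∩ Y) u := by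
  obtain ⟨W, Q, j, c, hj, hW, hQ⟩ := hXY.exists_conflation_inter hcomp hT
  obtain ⟨v, hv⟩ := Ext1IsZero.exists_extension (hXY.ext1IsZero hQ hK) hj u
  exact ⟨W, j, v, hW, hv⟩

-- If the approximation `X₁ ⟶ K` with kernel `Y₁` factors through `W ∈ ω`, then `X₁` is a direct
-- summand of `W ⊞ Y₁`.
lemma mem_right_of_factorsThrough (hXY : IsCotorsionPair E X Y) (hcomp : IsCompleteCP E X Y)
    (hher : IsHereditaryCP E X Y) {K : 𝒜}
    (hK : ∀ T ∈ X, ∀ u : T ⟶ K, FactorsThrough (X ∩ Y) u) : K ∈ Y := by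
  obtain ⟨⟨Y₁, X₁, y, u, hu, hX₁, hY₁⟩, -⟩ := hcomp K
  obtain ⟨W, w, v, hW, rfl⟩ := hK X₁ hX₁ u
  obtain ⟨l, hl⟩ := Ext1IsZero.exists_lift (hXY.ext1IsZero hW.1 hY₁) hu v
  obtain ⟨z, hz⟩ := hu.exists_lift (𝟙 X₁ - w ≫ l) (by simp [hl])
  have hY := hXY.additivelyClosed_right
  have hX₁Y : X₁ ∈ Y := hY.2.2.2 (biprod.lift w z) (biprod.desc l y) (by simp [hz])
    (hY.2.1 W Y₁ hW.2 hY₁)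
  exact hher.2 y _ hu hY₁ hX₁Y

lemma exists_comp_eq_of_stableIso (hXY : IsCotorsionPair E X Y) {A B T : 𝒜} {f : A ⟶ B}
    (hf : FibO (X ∩ Y) f) (hfs : StableIso X (X ∩ Y) f) (hT : T ∈ X) (b : T ⟶ B) :
    ∃ a : T ⟶ A, a ≫ f = b := by
  obtain ⟨a, W, w, t, hW, hwt⟩ := ((stableIso_iff hXY.additivelyClosed_inter).1 hfs).1 T hT b
  obtain ⟨h, rfl⟩ := hf W hW t
  exact ⟨a + w ≫ h, by simp [hwt]⟩

-- Extend the factorization of `u ≫ k` along the embedding `j` of `T` into an object of `ω`: its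
-- image in `B` then kills `T`, so it lifts to a correction term vanishing on `T`.
lemma factorsThrough_of_stableIso (hXY : IsCotorsionPair E X Y) (hcomp : IsCompleteCP E X Y)
    {A B K T : 𝒜} {k : K ⟶ A} {f : A ⟶ B} (h : E.conflation k f) (hf : FibO (X ∩ Y) f)
    (hfs : StableIso X (X ∩ Y) f) (hT : T ∈ X) (u : T ⟶ K) : FactorsThrough (X ∩ Y) u := by
  have hω := hXY.additivelyClosed_inter
  have := h.mono
  obtain ⟨V, x, y, hV, hxy⟩ := ((stableIso_iff hω).1 hfs).2 T hT (u ≫ k) <| by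
    simpa [E.comp_zero h] using FactorsThrough.zero hω T B
  obtain ⟨W, Q, j, c, hj, hW, hQ⟩ := hXY.exists_conflation_inter hcomp hT
  obtain ⟨x', rfl⟩ := Ext1IsZero.exists_extension (hXY.ext1IsZero hQ hV.2) hj x
  have hβ : j ≫ x' ≫ y = u ≫ k := by simpa using hxy
  obtain ⟨b, hb⟩ := hj.exists_desc (x' ≫ y ≫ f)
    (by rw [reassoc_of% hβ, E.comp_zero h, Limits.comp_zero])
  obtain ⟨a, rfl⟩ := hXY.exists_comp_eq_of_stableIso hf hfs hQ b
  obtain ⟨v, hv⟩ := h.exists_lift (x' ≫ y - c ≫ a) (by simp [hb])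
  refine ⟨W, j, v, hW, ?_⟩
  rw [← cancel_mono k, Category.assoc, hv, Preadditive.comp_sub, hβ, reassoc_of% E.comp_zero hj,
    zero_comp, sub_zero]

lemma tFibO_le_stableIso (hXY : IsCotorsionPair E X Y) (hcomp : IsCompleteCP E X Y) :
    TFibO E Y ≤ StableIso X (X ∩ Y) := by
  rintro A B p ⟨K, k, hp, hK⟩
  have hω := hXY.additivelyClosed_inter
  refine (stableIso_iff hω).2 ⟨fun T hT b ↦ ?_, fun T hT a ⟨W, x, y, hW, hxy⟩ ↦ ?_⟩
  · obtain ⟨a, rfl⟩ := Ext1IsZero.exists_lift (hXY.ext1IsZero hT hK) hp b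
    exact ⟨a, by simpa using FactorsThrough.zero hω T B⟩
  · obtain ⟨z, hz⟩ := Ext1IsZero.exists_lift (hXY.ext1IsZero hW.1 hK) hp y
    obtain ⟨u, hu⟩ := hp.exists_lift (a - x ≫ z) (by simp [hz, hxy])
    have huk := (hXY.factorsThrough_of_mem_right hcomp hT hK u).comp k
    simpa [hu] using huk.add hω ⟨W, x, z, hW, rfl⟩

theorem fibO_inf_stableIso (hXY : IsCotorsionPair E X Y) (hcomp : IsCompleteCP E X Y)
    (hher : IsHereditaryCP E X Y) (hE : IsWIC E) :
    FibO (X ∩ Y) ⊓ StableIso X (X ∩ Y) = TFibO E Y := by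
  refine le_antisymm (fun A B f ⟨hf, hfs⟩ ↦ ?_)
    (le_inf hXY.tFibO_le_fibO (hXY.tFibO_le_stableIso hcomp))
  obtain ⟨⟨Y₀, X₀, y, q, hq, hX₀, -⟩, -⟩ := hcomp B
  obtain ⟨a, rfl⟩ := hXY.exists_comp_eq_of_stableIso hf hfs hX₀ q
  obtain ⟨K, k, hk⟩ := IsDeflation.of_comp hE ⟨Y₀, y, hq⟩
  exact ⟨K, k, hk, hXY.mem_right_of_factorsThrough hcomp hher fun T hT ↦
    hXY.factorsThrough_of_stableIso hcomp hk hf hfs hT⟩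

theorem weqO_eq_stableIso (hXY : IsCotorsionPair E X Y) (hcomp : IsCompleteCP E X Y)
    (hher : IsHereditaryCP E X Y) (hE : IsWIC E) (hω : IsContravariantlyFinite (X ∩ Y)) :
    WeqO E (X ∩ Y) Y = StableIso X (X ∩ Y) := by
  have stableIso_inl (A : 𝒜) {W : 𝒜} (hW : W ∈ X ∩ Y) :
      StableIso X (X ∩ Y) (biprod.inl : A ⟶ A ⊞ W) :=
    (tCoFibO_inl E A hW).stableIso hXY.additivelyClosed_inter X
  ext A B f
  constructor
  · rintro ⟨W, hW, t, hft⟩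
    simpa using (StableIso X (X ∩ Y)).comp_mem _ _ (stableIso_inl A hW)
      (hXY.tFibO_le_stableIso hcomp _ hft)
  · intro hf
    obtain ⟨W, t, ht⟩ := hω B
    have hW := ht.1
    have hft : StableIso X (X ∩ Y) (biprod.desc f t) :=
      (StableIso X (X ∩ Y)).of_precomp biprod.inl _ (stableIso_inl A hW) (by simpa using hf)
    exact ⟨W, hW, t, (hXY.fibO_inf_stableIso hcomp hher hE).le _ ⟨ht.fibO_desc f, hft⟩⟩

theorem coFibO_inf_stableIso (hXY : IsCotorsionPair E X Y) (hcomp : IsCompleteCP E X Y)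
    (hher : IsHereditaryCP E X Y) (hE : IsWIC E) (hω : IsContravariantlyFinite (X ∩ Y)) :
    CoFibO E X ⊓ StableIso X (X ∩ Y) = TCoFibO E (X ∩ Y) := by
  have hinter := hXY.additivelyClosed_inter
  ext A B f
  refine ⟨fun ⟨hf, hfs⟩ ↦ ?_, fun hf ↦ ⟨?_, hf.stableIso hinter X⟩⟩
  · rw [← hXY.weqO_eq_stableIso hcomp hher hE hω] at hfs
    rw [hXY.coFibO_eq_llp hE hcomp] at hf
    obtain ⟨W, hW, t, hft⟩ := hfs
    have := hf _ hft
    have sq : CommSq biprod.inl f (biprod.desc f t) (𝟙 B) := ⟨by simp⟩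
    have hinl : CoFibO E (X ∩ Y) (f ≫ sq.lift) := by
      rw [sq.fac_left]
      exact (tCoFibO_inl E A hW).2
    exact ⟨⟨sq.lift ≫ biprod.fst, by simp⟩,
      hinl.of_comp_of_isSplitMono hE hinter.2.2.2 sq.fac_right⟩
  · obtain ⟨-, Z, d, hd, hZ⟩ := hf
    exact ⟨Z, d, hd, hZ.1⟩

end IsCotorsionPair

end WeakEquivalences

section ModelStructure

open MorphismProperty

variable {C : Type*} [Category* C]

lemma IsRetractMor.nonempty_retractArrow {A B A' B' : C} {g : A' ⟶ B'} {f : A ⟶ B}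
    (h : IsRetractMor g f) : Nonempty (RetractArrow g f) := by
  obtain ⟨φ₁, ψ₁, φ₂, ψ₂, h₁, h₂, hφ, hψ⟩ := h
  exact ⟨{ i := Arrow.homMk φ₁ φ₂ hφ, r := Arrow.homMk ψ₁ ψ₂ hψ.symm }⟩

theorem isModelStructure_of_llp_rlp {Cof Fib W : MorphismProperty C} [W.HasTwoOutOfThreeProperty]
    [W.IsStableUnderRetracts] (hCof : Cof = (Fib ⊓ W).llp) (hFib : Fib = (Cof ⊓ W).rlp)
    [HasFactorization (Cof ⊓ W) Fib] [HasFactorization Cof (Fib ⊓ W)] :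
    IsModelStructure Cof Fib W where
  weq_comp := W.comp_mem
  weq_cancel_left := W.of_precomp
  weq_cancel_right := W.of_postcomp
  retract_cofib _ _ h hf := by
    rw [hCof] at hf ⊢
    exact of_retract h.nonempty_retractArrow.some hf
  retract_fib _ _ h hf := by
    rw [hFib] at hf ⊢
    exact of_retract h.nonempty_retractArrow.some hf
  retract_weq _ _ h := of_retract h.nonempty_retractArrow.some
  lifting_left i p a b hi hiW hp h := by
    rw [hFib] at hp
    have := hp i ⟨hi, hiW⟩
    have sq : CommSq a i p b := ⟨h⟩
    exact ⟨sq.lift, sq.fac_left, sq.fac_right⟩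
  lifting_right i p a b hi hp hpW h := by
    rw [hCof] at hi
    have := hi p ⟨hp, hpW⟩
    have sq : CommSq a i p b := ⟨h⟩
    exact ⟨sq.lift, sq.fac_left, sq.fac_right⟩
  fact_left f :=
    have φ := factorizationData (Cof ⊓ W) Fib f
    ⟨φ.Z, φ.i, φ.p, φ.fac, φ.hi.1, φ.hi.2, φ.hp⟩
  fact_right f :=
    have φ := factorizationData Cof (Fib ⊓ W) f
    ⟨φ.Z, φ.i, φ.p, φ.fac, φ.hi, φ.hp.1, φ.hp.2⟩

end ModelStructure

/-- Theorem 3.1 (the "if" part of the main theorem): a hereditary complete cotorsion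
pair with contravariantly finite core induces the `ω`-model structure. -/
theorem stmt_0 (E : ExactStructure 𝒜) (hwic : IsWIC E) (X Y : Set 𝒜)
    (hcp : IsCotorsionPair E X Y) (hcomp : IsCompleteCP E X Y)
    (hher : IsHereditaryCP E X Y) (hcf : IsContravariantlyFinite (X ∩ Y)) :
    IsModelStructure (CoFibO E X) (FibO (X ∩ Y)) (WeqO E (X ∩ Y) Y) ∧
    (∀ {A B : 𝒜} (f : A ⟶ B),
      (CoFibO E X f ∧ WeqO E (X ∩ Y) Y f) ↔ TCoFibO E (X ∩ Y) f) ∧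
    (∀ {A B : 𝒜} (f : A ⟶ B),
      (FibO (X ∩ Y) f ∧ WeqO E (X ∩ Y) Y f) ↔ TFibO E Y f) := by
  rw [hcp.weqO_eq_stableIso hcomp hher hwic hcf]
  have trivCofib := hcp.coFibO_inf_stableIso hcomp hher hwic hcf
  have trivFib := hcp.fibO_inf_stableIso hcomp hher hwic
  have : (CoFibO E X ⊓ StableIso X (X ∩ Y)).HasFactorization (FibO (X ∩ Y)) :=
    trivCofib ▸ hcf.hasFactorization_tCoFibO_fibO E
  have : (CoFibO E X).HasFactorization (FibO (X ∩ Y) ⊓ StableIso X (X ∩ Y)) :=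
    trivFib ▸ hcp.hasFactorization_coFibO_tFibO hcomp
  refine ⟨isModelStructure_of_llp_rlp ?_ ?_, fun f ↦ ?_, fun f ↦ ?_⟩
  · rw [trivFib, hcp.coFibO_eq_llp hwic hcomp]
  · rw [trivCofib, fibO_eq_rlp E]
  · rw [← trivCofib, MorphismProperty.inf_iff]
  · rw [← trivFib, MorphismProperty.inf_iff]
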